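/- arXiv:1311.2456 — 3 statements merged into one kernel-verified Lean document; each statement's English description precedes it below -/
import Mathlib

section
/- Let V be a finite set with |V| = n, and let R_1, …, R_p be pairwise disjoint subsets of V with designated elements r_i ∈ R_i and with |R_i| ≤ q for every i. If 𝓖 is a family of subsets of V such that every F ∈ 𝓖 satisfies: for every i, if r_i ∈ F then |F ∩ R_i| ≥ 2, then |𝓖| ≤ 2^n · ((2^q − 1)/2^q)^p, where the right-hand side is interpreted as a real number. -/
/-!
A set `F ⊆ V` is determined by its trace on `V \ ⋃ i, R i` and its traces `F ∩ R i`. For `F ∈ 𝓖`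
the trace on `R i` is never the singleton `{r i}`, so at most `2 ^ |R i| - 1` traces occur there,
and disjointness gives `|𝓖| ≤ 2 ^ (n - ∑ i, |R i|) * ∏ i, (2 ^ |R i| - 1)`. Since `|R i| ≤ q`, each
factor is at most `2 ^ |R i| * ((2 ^ q - 1) / 2 ^ q)`, and the powers of two recombine to `2 ^ n`.
-/

/-- Among the `2 ^ k` subsets of a `k`-set, discarding one costs the proportion `1 / 2 ^ k ≥ 1 / 2 ^ q`. -/
lemma two_pow_sub_one_le_mul_ratio {k q : ℕ} (h : k ≤ q) :
    (2 : ℝ) ^ k - 1 ≤ 2 ^ k * ((2 ^ q - 1) / 2 ^ q) := by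
  have h2 : (2 : ℝ) ^ k ≤ 2 ^ q := pow_le_pow_right₀ (by norm_num) h
  rw [← mul_div_assoc, le_div_iff₀ (by positivity)]
  nlinarith


/-- Let `V` be a finite set with `|V| = n`, and let `R_1, …, R_p` be pairwise
disjoint subsets of `V` with designated elements `r i ∈ R i` and `|R i| ≤ q` for every `i`.
If `𝓖` is a family of subsets of `V` such that every `F ∈ 𝓖` satisfies: for every `i`,
if `r i ∈ F` then `|F ∩ R i| ≥ 2`, then `|𝓖| ≤ 2 ^ n · ((2 ^ q − 1) / 2 ^ q) ^ p`
(as real numbers). -/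
theorem families_with_infants_bound {α : Type*} [DecidableEq α]
    (V : Finset α) (n : ℕ) (hn : V.card = n) (p q : ℕ) (hq : 1 ≤ q)
    (R : Fin p → Finset α) (r : Fin p → α)
    (hRV : ∀ i, R i ⊆ V) (hr : ∀ i, r i ∈ R i) (hRq : ∀ i, (R i).card ≤ q)
    (hdisj : ∀ i j, i ≠ j → Disjoint (R i) (R j))
    (𝓖 : Finset (Finset α))
    (h𝓖V : ∀ F ∈ 𝓖, F ⊆ V)
    (h𝓖 : ∀ F ∈ 𝓖, ∀ i, r i ∈ F → 2 ≤ (F ∩ R i).card) :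
    (𝓖.card : ℝ) ≤ 2 ^ n * ((2 ^ q - 1) / 2 ^ q) ^ p := by
  classical
  set B := Finset.univ.biUnion R with hB
  have hBV : B ⊆ V := Finset.biUnion_subset.2 fun i _ => hRV i
  have hBcard : B.card = ∑ i, (R i).card :=
    Finset.card_biUnion fun i _ j _ hij => hdisj i j hij
  -- The possible pairs (trace outside the families, traces on the families).
  let T := (V \ B).powerset ×ˢ Fintype.piFinset fun i => (R i).powerset.erase {r i}
  have hle : 𝓖.card ≤ T.card := by
    refine Finset.card_le_card_of_injOn (fun F => (F \ B, fun i => F ∩ R i)) ?_ ?_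
    · intro F hF
      simp only [T, Finset.mem_coe, Finset.mem_product, Finset.mem_powerset,
        Fintype.mem_piFinset, Finset.mem_erase]
      refine ⟨Finset.sdiff_subset_sdiff (h𝓖V F hF) subset_rfl, fun i => ⟨fun h => ?_,
        Finset.inter_subset_right⟩⟩
      have hmem : r i ∈ F ∩ R i := h ▸ Finset.mem_singleton_self _
      have := h𝓖 F hF i (Finset.mem_inter.1 hmem).1
      rw [h, Finset.card_singleton] at this
      omega
    · intro F _ G _ h
      obtain ⟨h1, h2⟩ := Prod.mk.inj h
      ext x
      by_cases hx : x ∈ B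
      · obtain ⟨i, -, hi⟩ := Finset.mem_biUnion.1 hx
        simpa [hi] using Finset.ext_iff.1 (congrFun h2 i) x
      · simpa [hx] using Finset.ext_iff.1 h1 x
  have hT : (T.card : ℝ) = 2 ^ (V \ B).card * ∏ i, ((2 : ℝ) ^ (R i).card - 1) := by
    have h1 (i : Fin p) : (((R i).powerset.erase {r i}).card : ℝ) = 2 ^ (R i).card - 1 := by
      rw [Finset.cast_card_erase_of_mem (by simpa using hr i), Finset.card_powerset]
      norm_num
    simp [T, Finset.card_product, Fintype.card_piFinset, -Finset.card_erase_of_mem, h1]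
  calc (𝓖.card : ℝ) ≤ T.card := by exact_mod_cast hle
    _ = 2 ^ (V \ B).card * ∏ i, ((2 : ℝ) ^ (R i).card - 1) := hT
    _ ≤ 2 ^ (V \ B).card * ∏ i, ((2 : ℝ) ^ (R i).card * ((2 ^ q - 1) / 2 ^ q)) := by
      gcongr with i
      · intro i _
        exact sub_nonneg.2 (one_le_pow₀ (by norm_num))
      · exact two_pow_sub_one_le_mul_ratio (hRq i)
    _ = 2 ^ n * ((2 ^ q - 1) / 2 ^ q) ^ p := by
      rw [Finset.prod_mul_distrib, Finset.prod_pow_eq_pow_sum, ← hBcard, ← mul_assoc, ← pow_add,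
        Finset.card_sdiff_add_card_eq_card hBV, hn]
      rw [Finset.prod_const, Finset.card_univ, Fintype.card_fin]
end

section
/- Let n ≥ 1 and k ≥ 1 be natural numbers, and for a subset F ⊆ {0, 1, …, n−1} define enc(F) = Σ_{v ∈ F} (k+1)^v. Then for any subsets F_1, …, F_k ⊆ {0, 1, …, n−1}, the sets F_1, …, F_k are pairwise disjoint and their union is all of {0, 1, …, n−1} if and only if Σ_{i=1}^k enc(F_i) = Σ_{v=0}^{n−1} (k+1)^v. -/
/-!
Let `m v` be the number of indices `i` with `v ∈ F i`. Exchanging the order of summation gives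
`Σ_i Σ_{v ∈ F i} (k+1)^v = Σ_{v < n} m v * (k+1)^v`. As there are only `k` sets, `m v ≤ k < k + 1`,
so both sides of the equation in the theorem are base-`(k+1)` expansions with legal digits, and they
agree iff `m v = 1` for every `v < n` (`digits_unique`). The latter says that each `v < n` lies in
exactly one `F i`, that is, that the sets partition `{0, …, n−1}` (`partition_iff_count_eq_one`).
-/

/-- Uniqueness of base-`B` expansions of length `n`. -/
lemma digits_unique (B : ℕ) (n : ℕ) (a b : ℕ → ℕ)
    (ha : ∀ v < n, a v < B) (hb : ∀ v < n, b v < B)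
    (h : ∑ v ∈ Finset.range n, a v * B ^ v = ∑ v ∈ Finset.range n, b v * B ^ v) :
    ∀ v < n, a v = b v := by
  induction n generalizing a b with
  | zero => intro v hv; omega
  | succ n ih =>
    -- Split off the lowest digit: it is the residue mod `B`, the other digits form the quotient.
    have split : ∀ c : ℕ → ℕ, ∑ v ∈ Finset.range (n + 1), c v * B ^ v
        = c 0 + B * ∑ v ∈ Finset.range n, c (v + 1) * B ^ v := by
      intro c
      rw [Finset.sum_range_succ', Finset.mul_sum, add_comm]
      simp only [pow_zero, mul_one, add_right_inj]
      exact Finset.sum_congr rfl fun v _ => by ring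
    rw [split, split] at h
    have ha0 := ha 0 n.succ_pos
    have hb0 := hb 0 n.succ_pos
    have h0 : a 0 = b 0 := by
      have := congrArg (· % B) h
      simpa [Nat.add_mul_mod_self_left, Nat.mod_eq_of_lt ha0, Nat.mod_eq_of_lt hb0] using this
    rw [h0, add_right_inj] at h
    have ih' := ih (fun v => a (v + 1)) (fun v => b (v + 1))
      (fun v hv => ha _ (by omega)) (fun v hv => hb _ (by omega))
      (Nat.eq_of_mul_eq_mul_left (by omega) h)
    rintro (_ | v) hv
    · exact h0
    · exact ih' v (by omega)

lemma partition_iff_count_eq_one (n k : ℕ) (F : Fin k → Finset ℕ)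
    (hF : ∀ i, F i ⊆ Finset.range n) :
    ((∀ i j, i ≠ j → Disjoint (F i) (F j)) ∧
      Finset.univ.biUnion F = Finset.range n) ↔
    ∀ v < n, (Finset.univ.filter fun i => v ∈ F i).card = 1 := by
  simp only [Finset.card_eq_one, Finset.ext_iff, Finset.mem_filter, Finset.mem_univ, true_and,
    Finset.mem_singleton, Finset.mem_biUnion, Finset.mem_range]
  constructor
  · rintro ⟨hd, hu⟩ v hv
    obtain ⟨i, hi⟩ := (hu v).2 hv
    refine ⟨i, fun j => ⟨fun hj => ?_, fun hj => hj ▸ hi⟩⟩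
    by_contra hne
    exact Finset.disjoint_left.1 (hd j i hne) hj hi
  · intro h
    refine ⟨fun i j hij => Finset.disjoint_left.2 fun v hi hj => ?_, fun v => ⟨?_, fun hv => ?_⟩⟩
    · obtain ⟨l, hl⟩ := h v (Finset.mem_range.1 (hF i hi))
      exact hij (((hl i).1 hi).trans ((hl j).1 hj).symm)
    · rintro ⟨i, hi⟩
      exact Finset.mem_range.1 (hF i hi)
    · obtain ⟨l, hl⟩ := h v hv
      exact ⟨l, (hl l).2 rfl⟩

lemma sum_enc_eq (n k B : ℕ) (F : Fin k → Finset ℕ) (hF : ∀ i, F i ⊆ Finset.range n) :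
    ∑ i, ∑ v ∈ F i, B ^ v
      = ∑ v ∈ Finset.range n, (Finset.univ.filter fun i => v ∈ F i).card * B ^ v := by
  rw [Finset.sum_comm' (t' := Finset.range n)
    (s' := fun v => Finset.univ.filter fun i => v ∈ F i)]
  · simp
  · intro i v
    simpa using fun hv => Finset.mem_range.1 (hF i hv)

/-- Let `n ≥ 1` and `k ≥ 1`, and for `F ⊆ {0, …, n−1}` define
`enc F = Σ_{v ∈ F} (k+1)^v`. Then for any `F_1, …, F_k ⊆ {0, …, n−1}`, the sets
are pairwise disjoint with union `{0, …, n−1}` if and only if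
`Σ_i enc (F i) = Σ_{v < n} (k+1)^v`. -/
theorem encoding_partition_iff (n k : ℕ) (hn : 1 ≤ n) (hk : 1 ≤ k)
    (F : Fin k → Finset ℕ) (hF : ∀ i, F i ⊆ Finset.range n) :
    ((∀ i j, i ≠ j → Disjoint (F i) (F j)) ∧
      Finset.univ.biUnion F = Finset.range n) ↔
    ∑ i, ∑ v ∈ F i, (k + 1) ^ v = ∑ v ∈ Finset.range n, (k + 1) ^ v := by
  rw [partition_iff_count_eq_one n k F hF, sum_enc_eq n k (k + 1) F hF]
  constructor
  · intro h
    refine Finset.sum_congr rfl fun v hv => ?_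
    rw [h v (Finset.mem_range.1 hv), one_mul]
  · intro h
    refine digits_unique (k + 1) n _ (fun _ => 1) (fun v _ => ?_) (fun v _ => by omega)
      (by simpa using h)
    exact Nat.lt_succ_of_le ((Finset.card_le_univ _).trans_eq (Fintype.card_fin k))
end

section
/- Let G be a finite simple graph on n vertices in which every vertex has degree at most Δ, where Δ ≥ 1, and let p = ⌊n/(Δ² + 2)⌋. Then there exist pairwise disjoint subsets R_1, …, R_p of the vertex set, each of size at most Δ + 2, and designated vertices r_i ∈ R_i, such that for every dominating set D of G and every i = 1, …, p, the set D intersects R_i \ {r_i}. In particular, if r_i ∈ D then |D ∩ R_i| ≥ 2. -/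
/-!
Two vertices have disjoint closed neighborhoods exactly when they are distinct and non-adjacent in
`G²`. Since `G²` has maximum degree at most `Δ²`, a greedy choice yields an independent set
`{v_1, …, v_p}` of `G²` as soon as `p (Δ² + 1) ≤ n` (`exists_disjoint_closedNbhd`). The union of the
closed neighborhoods has at most `p (Δ + 1)` vertices, and `p (Δ + 2) ≤ p (Δ² + 2) ≤ n` because
`Δ ≥ 1`, so there are at least `p` vertices outside it; these serve as the infants `r_i`, and
`R_i = N[v_i] ∪ {r_i}`. A dominating set meets `N[v_i] = R_i \ {r_i}` because it dominates `v_i`.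
-/

/-- The closed neighborhood `N[v]`. -/
def closedNbhd {V : Type*} [Fintype V] [DecidableEq V] (G : SimpleGraph V) [DecidableRel G.Adj]
    (v : V) : Finset V :=
  insert v (G.neighborFinset v)

section

variable {V : Type*} [Fintype V] [DecidableEq V] (G : SimpleGraph V) [DecidableRel G.Adj]

lemma mem_closedNbhd {v w : V} : w ∈ closedNbhd G v ↔ w = v ∨ G.Adj v w := by
  simp [closedNbhd]

lemma card_closedNbhd {Δ : ℕ} (hdeg : ∀ v, G.degree v ≤ Δ) (v : V) :
    (closedNbhd G v).card ≤ Δ + 1 := by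
  refine (Finset.card_insert_le _ _).trans ?_
  rw [G.card_neighborFinset_eq_degree]
  exact Nat.add_le_add_right (hdeg v) 1

/-- The ball of radius two around `v`. Every `N[u]` with `u` adjacent to `v` contains `v`; removing
`v` from it makes the union bound give `Δ² + 1`. -/
def ballTwo (v : V) : Finset V :=
  insert v ((G.neighborFinset v).biUnion fun u => (closedNbhd G u).erase v)

lemma card_ballTwo {Δ : ℕ} (hdeg : ∀ v, G.degree v ≤ Δ) (v : V) :
    (ballTwo G v).card ≤ Δ ^ 2 + 1 := by
  refine (Finset.card_insert_le _ _).trans (Nat.add_le_add_right ?_ 1)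
  have h : ∀ u ∈ G.neighborFinset v, ((closedNbhd G u).erase v).card ≤ Δ := by
    intro u hu
    have hv : v ∈ closedNbhd G u :=
      (mem_closedNbhd G).2 (Or.inr ((G.mem_neighborFinset v u).1 hu).symm)
    have h1 := Finset.card_erase_of_mem hv
    have h2 := card_closedNbhd G hdeg u
    omega
  refine (Finset.card_biUnion_le_card_mul _ _ Δ h).trans ?_
  rw [G.card_neighborFinset_eq_degree, sq]
  exact Nat.mul_le_mul_right _ (hdeg v)

lemma disjoint_closedNbhd_of_notMem_ballTwo {v w : V} (h : w ∉ ballTwo G v) :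
    Disjoint (closedNbhd G v) (closedNbhd G w) := by
  rw [Finset.disjoint_left]
  intro x hx hx'
  apply h
  rw [mem_closedNbhd] at hx hx'
  simp only [ballTwo, Finset.mem_insert, Finset.mem_biUnion, SimpleGraph.mem_neighborFinset,
    Finset.mem_erase, mem_closedNbhd]
  by_cases hwv : w = v
  · exact Or.inl hwv
  right
  rcases hx with rfl | hx
  · rcases hx' with rfl | hx'
    · exact absurd rfl hwv
    · exact ⟨w, hx'.symm, hwv, Or.inl rfl⟩
  · refine ⟨x, hx, hwv, ?_⟩
    rcases hx' with rfl | hx'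
    · exact Or.inl rfl
    · exact Or.inr hx'.symm

/-- Greedy choice of an independent set of size `k` in the square of `G`. -/
lemma exists_disjoint_closedNbhd {Δ : ℕ} (hdeg : ∀ v, G.degree v ≤ Δ) (k : ℕ)
    (hk : k * (Δ ^ 2 + 1) ≤ Fintype.card V) :
    ∃ c : Fin k → V, ∀ i j, i ≠ j → Disjoint (closedNbhd G (c i)) (closedNbhd G (c j)) := by
  induction k with
  | zero => exact ⟨Fin.elim0, fun i => i.elim0⟩
  | succ k ih =>
    rw [Nat.succ_mul] at hk
    obtain ⟨c, hc⟩ := ih (by omega)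
    have hcard : (Finset.univ.biUnion fun i => ballTwo G (c i)).card < Fintype.card V := by
      have := Finset.card_biUnion_le_card_mul Finset.univ (fun i => ballTwo G (c i)) (Δ ^ 2 + 1)
        (fun i _ => card_ballTwo G hdeg (c i))
      rw [Finset.card_univ, Fintype.card_fin] at this
      omega
    obtain ⟨w, hw⟩ : ∃ w, w ∉ Finset.univ.biUnion fun i => ballTwo G (c i) := by
      by_contra! hall
      rw [Finset.eq_univ_of_forall hall, Finset.card_univ] at hcard
      exact lt_irrefl _ hcard
    have hd : ∀ i, Disjoint (closedNbhd G (c i)) (closedNbhd G w) := fun i =>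
      disjoint_closedNbhd_of_notMem_ballTwo G fun hi =>
        hw (Finset.mem_biUnion.2 ⟨i, Finset.mem_univ i, hi⟩)
    refine ⟨Fin.cons w c, fun i j => ?_⟩
    refine Fin.cases ?_ (fun i => ?_) i <;> refine Fin.cases ?_ (fun j => ?_) j
    · exact fun h => absurd rfl h
    · exact fun _ => (hd j).symm
    · exact fun _ => hd i
    · exact fun h => hc i j fun hij => h (congrArg Fin.succ hij)

end


/-- Let `G` be a finite simple graph on `n` vertices of maximum degree at
most `Δ ≥ 1`, and let `p = ⌊n / (Δ² + 2)⌋`. Then there exist pairwise disjoint subsets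
`R_1, …, R_p` of the vertex set, each of size at most `Δ + 2`, and designated vertices
`r i ∈ R i`, such that every dominating set `D` of `G` intersects `R i \ {r i}` for
every `i`; in particular, if `r i ∈ D` then `|D ∩ R i| ≥ 2`. -/
theorem domatic_families_with_infants {V : Type*} [Fintype V] [DecidableEq V]
    (G : SimpleGraph V) [DecidableRel G.Adj] (Δ : ℕ) (hΔ : 1 ≤ Δ)
    (hdeg : ∀ v, G.degree v ≤ Δ) :
    ∃ (R : Fin (Fintype.card V / (Δ ^ 2 + 2)) → Finset V)
      (r : Fin (Fintype.card V / (Δ ^ 2 + 2)) → V),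
      (∀ i j, i ≠ j → Disjoint (R i) (R j)) ∧
      (∀ i, (R i).card ≤ Δ + 2) ∧
      (∀ i, r i ∈ R i) ∧
      (∀ D : Finset V, (∀ v, v ∈ D ∨ ∃ u ∈ D, G.Adj v u) →
        ∀ i, ((R i).erase (r i) ∩ D).Nonempty ∧ (r i ∈ D → 2 ≤ (D ∩ R i).card)) := by
  have hp := Nat.div_mul_le_self (Fintype.card V) (Δ ^ 2 + 2)
  set p := Fintype.card V / (Δ ^ 2 + 2)
  obtain ⟨c, hc⟩ := exists_disjoint_closedNbhd G hdeg p
    ((Nat.mul_le_mul_left p (by omega)).trans hp)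
  set U := Finset.univ.biUnion fun i => closedNbhd G (c i) with hU
  have hUcard : U.card ≤ p * (Δ + 1) := by
    have := Finset.card_biUnion_le_card_mul Finset.univ (fun i => closedNbhd G (c i)) (Δ + 1)
      (fun i _ => card_closedNbhd G hdeg (c i))
    rwa [Finset.card_univ, Fintype.card_fin] at this
  have hcompl : p ≤ Uᶜ.card := by
    have h1 : p * (Δ + 2) ≤ p * (Δ ^ 2 + 2) := Nat.mul_le_mul_left p (by nlinarith)
    have h2 : p * (Δ + 2) = p * (Δ + 1) + p := by ring
    rw [Finset.card_compl]
    omega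
  obtain ⟨e⟩ : Nonempty (Fin p ↪ {x // x ∈ Uᶜ}) :=
    Function.Embedding.nonempty_of_card_le (by simpa only [Fintype.card_fin, Fintype.card_coe])
  have he : ∀ i j, (e i : V) ∉ closedNbhd G (c j) := fun i j h =>
    Finset.mem_compl.1 (e i).2 (Finset.mem_biUnion.2 ⟨j, Finset.mem_univ j, h⟩)
  refine ⟨fun i => insert (e i : V) (closedNbhd G (c i)), fun i => e i, fun i j hij => ?_,
    fun i => (Finset.card_insert_le _ _).trans
      (Nat.add_le_add_right (card_closedNbhd G hdeg (c i)) 1),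
    fun i => Finset.mem_insert_self _ _, fun D hD i => ?_⟩
  · rw [Finset.disjoint_insert_left, Finset.disjoint_insert_right, Finset.mem_insert]
    refine ⟨?_, he j i, hc i j hij⟩
    rintro (h | h)
    · exact hij (e.injective (Subtype.ext h))
    · exact he i j h
  · obtain ⟨x, hxD, hxN⟩ : ∃ x ∈ D, x ∈ closedNbhd G (c i) := by
      rcases hD (c i) with h | ⟨u, hu, hadj⟩
      · exact ⟨c i, h, (mem_closedNbhd G).2 (Or.inl rfl)⟩
      · exact ⟨u, hu, (mem_closedNbhd G).2 (Or.inr hadj)⟩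
    have hne : x ≠ e i := fun h => he i i (h ▸ hxN)
    refine ⟨⟨x, ?_⟩, fun hr => ?_⟩
    · exact Finset.mem_inter.2 ⟨Finset.mem_erase.2 ⟨hne, Finset.mem_insert_of_mem hxN⟩, hxD⟩
    · exact Finset.one_lt_card.2 ⟨x, Finset.mem_inter.2 ⟨hxD, Finset.mem_insert_of_mem hxN⟩,
        e i, Finset.mem_inter.2 ⟨hr, Finset.mem_insert_self _ _⟩, hne⟩
end
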